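/- Let h ∈ W̃_p with |{h > 0}| > 0. If u is an eigenfunction of the fractional p-Laplacian eigenvalue problem (-Δ)ₚˢ u = λ h |u|^(p-2) u (with zero exterior condition) associated with an eigenvalue λ > λ₁, then u changes sign: both u₊ ≢ 0 and u₋ ≢ 0. -/

import Mathlib

open MeasureTheory Metric Set Filter

noncomputable section

/-- The Gagliardo `p`-energy `‖u‖^p = ∫∫ |u(x)-u(y)|^p / |x-y|^{N+sp} dx dy`. -/
def gagE (N : ℕ) (s p : ℝ) (u : EuclideanSpace ℝ (Fin N) → ℝ) : ℝ :=
  ∫ x, ∫ y, |u x - u y| ^ p / ‖x - y‖ ^ ((N : ℝ) + s * p)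

/-- The Gagliardo norm of `W₀^{s,p}`. -/
def gagNorm (N : ℕ) (s p : ℝ) (u : EuclideanSpace ℝ (Fin N) → ℝ) : ℝ :=
  gagE N s p u ^ (1 / p)

/-- Membership in `W₀^{s,p}(Ω)`: measurable, finite Gagliardo energy, vanishing outside `Ω`. -/
def memW0 (N : ℕ) (s p : ℝ) (Ω : Set (EuclideanSpace ℝ (Fin N)))
    (u : EuclideanSpace ℝ (Fin N) → ℝ) : Prop :=
  Measurable u ∧
  Integrable (fun z : EuclideanSpace ℝ (Fin N) × EuclideanSpace ℝ (Fin N) =>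
    |u z.1 - u z.2| ^ p / ‖z.1 - z.2‖ ^ ((N : ℝ) + s * p)) ∧
  ∀ x, x ∉ Ω → u x = 0

/-- The fractional `p`-Laplacian pairing `⟨A u, v⟩`. -/
def fracPair (N : ℕ) (s p : ℝ) (u v : EuclideanSpace ℝ (Fin N) → ℝ) : ℝ :=
  ∫ x, ∫ y, |u x - u y| ^ (p - 2) * (u x - u y) * (v x - v y) / ‖x - y‖ ^ ((N : ℝ) + s * p)

/-- `q` is below the critical exponent `p*ₛ = Np/(N-sp)` (`= ∞` if `sp ≥ N`). -/
def subCrit (N : ℕ) (s p q : ℝ) : Prop :=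
  s * p < N → q < N * p / ((N : ℝ) - s * p)

/-- The class `W_q`: `h ρ^{sa} ∈ L^r(Ω)` for some `a ∈ [0,q)`, `r ∈ (1,∞)` with
`1/r + a/p + (q-a)/p*ₛ < 1` (the last term read as `0` when `p*ₛ = ∞`). -/
def inWq (N : ℕ) (Ω : Set (EuclideanSpace ℝ (Fin N))) (s p q : ℝ)
    (h : EuclideanSpace ℝ (Fin N) → ℝ) : Prop :=
  ∃ a r : ℝ, 0 ≤ a ∧ a < q ∧ 1 < r ∧
    ((s * p < N ∧ 1 / r + a / p + (q - a) * ((N : ℝ) - s * p) / ((N : ℝ) * p) < 1) ∨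
      (¬ s * p < N ∧ 1 / r + a / p < 1)) ∧
    IntegrableOn (fun x => |h x * infDist x (frontier Ω) ^ (s * a)| ^ r) Ω

/-- The class `W̃_q`: `h ρ^{sa} ∈ L^r(Ω)` for some `a ∈ [0,1]`, `r ∈ (1,∞)` with
`1/r + a/p + (max{p,q}-a)/p*ₛ < 1`. -/
def inWtq (N : ℕ) (Ω : Set (EuclideanSpace ℝ (Fin N))) (s p q : ℝ)
    (h : EuclideanSpace ℝ (Fin N) → ℝ) : Prop :=
  ∃ a r : ℝ, 0 ≤ a ∧ a ≤ 1 ∧ 1 < r ∧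
    ((s * p < N ∧
        1 / r + a / p + (max p q - a) * ((N : ℝ) - s * p) / ((N : ℝ) * p) < 1) ∨
      (¬ s * p < N ∧ 1 / r + a / p < 1)) ∧
    IntegrableOn (fun x => |h x * infDist x (frontier Ω) ^ (s * a)| ^ r) Ω

/-- Weak convergence `uₙ ⇀ u` in `W₀^{s,p}(Ω)`: bounded Gagliardo norms together with
convergence against all continuous compactly supported test functions (a total family in
the dual `W^{-s,p'}(Ω)`). -/
def weakConv (N : ℕ) (s p : ℝ) (u_ : ℕ → EuclideanSpace ℝ (Fin N) → ℝ)
    (u : EuclideanSpace ℝ (Fin N) → ℝ) : Prop :=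
  (∃ M : ℝ, ∀ n, gagNorm N s p (u_ n) ≤ M) ∧
  ∀ φ : EuclideanSpace ℝ (Fin N) → ℝ, Continuous φ → HasCompactSupport φ →
    Tendsto (fun n => ∫ x, u_ n x * φ x) atTop (nhds (∫ x, u x * φ x))

/-- The first eigenvalue `λ₁ = inf{‖u‖^p : u ∈ W₀^{s,p}(Ω), ∫_Ω h|u|^p = 1}`. -/
def lam1 (N : ℕ) (s p : ℝ) (Ω : Set (EuclideanSpace ℝ (Fin N)))
    (h : EuclideanSpace ℝ (Fin N) → ℝ) : ℝ :=
  sInf {t : ℝ | ∃ u, memW0 N s p Ω u ∧ (∫ x in Ω, h x * |u x| ^ p) = 1 ∧ t = gagE N s p u}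

/-- `(λ, u)` is an eigenpair of `(-Δ)ₚˢ u = λ h |u|^{p-2} u` in `Ω`, `u = 0` outside `Ω`. -/
def isEigenpair (N : ℕ) (s p : ℝ) (Ω : Set (EuclideanSpace ℝ (Fin N)))
    (h : EuclideanSpace ℝ (Fin N) → ℝ) (lam : ℝ)
    (u : EuclideanSpace ℝ (Fin N) → ℝ) : Prop :=
  memW0 N s p Ω u ∧ ¬ (∀ᵐ x ∂volume.restrict Ω, u x = 0) ∧
  ∀ v, memW0 N s p Ω v →
    fracPair N s p u v = lam * ∫ x in Ω, h x * |u x| ^ (p - 2) * u x * v x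

section helpers

lemma picone_aux {p A B c d : ℝ} (hp : 1 < p) (hB : 0 < B) (hAB : B < A) (hc : 0 ≤ c) (hd : 0 ≤ d) :
    (A - B) ^ (p - 1) * (c ^ p / A ^ (p - 1) - d ^ p / B ^ (p - 1)) ≤ |c - d| ^ p := by
  have hA : 0 < A := hB.trans hAB
  have hD : 0 < A - B := sub_pos.2 hAB
  have hD1 := Real.rpow_pos_of_pos hD (p - 1)
  have hA1 := Real.rpow_pos_of_pos hA (p - 1)
  have hB1 := Real.rpow_pos_of_pos hB (p - 1)
  rcases le_or_gt c d with hcd | hcd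
  · have h1 : c ^ p / A ^ (p - 1) ≤ d ^ p / B ^ (p - 1) := by
      apply div_le_div₀ (Real.rpow_nonneg hd _) (Real.rpow_le_rpow hc hcd (by linarith)) hB1
      exact Real.rpow_le_rpow hB.le hAB.le (by linarith)
    have : (A - B) ^ (p - 1) * (c ^ p / A ^ (p - 1) - d ^ p / B ^ (p - 1)) ≤ 0 :=
      mul_nonpos_of_nonneg_of_nonpos hD1.le (by linarith)
    exact this.trans (Real.rpow_nonneg (abs_nonneg _) _)
  · rw [abs_of_pos (sub_pos.2 hcd)]
    have hcd' : 0 ≤ c - d := (sub_pos.2 hcd).le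
    have key := (convexOn_rpow hp.le).2
      (show (c - d) * (A / (A - B)) ∈ Ici (0:ℝ) from mul_nonneg hcd' (by positivity))
      (show d * (A / B) ∈ Ici (0:ℝ) from mul_nonneg hd (by positivity))
      (show 0 ≤ (A - B) / A by positivity) (show 0 ≤ B / A by positivity)
      (by field_simp; ring)
    simp only [smul_eq_mul] at key
    have e1 : (A - B) / A * ((c - d) * (A / (A - B))) + B / A * (d * (A / B)) = c := by
      field_simp; ring
    have hsp : ∀ x : ℝ, 0 < x → x ^ p = x ^ (p - 1) * x := fun x hx => by
      rw [← Real.rpow_add_one hx.ne']; ring_nf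
    rw [e1, Real.mul_rpow hcd' (by positivity), Real.mul_rpow hd (by positivity),
      Real.div_rpow hA.le hD.le, Real.div_rpow hA.le hB.le, hsp A hA, hsp _ hD, hsp B hB] at key
    have e2 : (A - B) / A * ((c - d) ^ p * (A ^ (p - 1) * A / ((A - B) ^ (p - 1) * (A - B)))) +
        B / A * (d ^ p * (A ^ (p - 1) * A / (B ^ (p - 1) * B))) =
        A ^ (p - 1) * ((c - d) ^ p / (A - B) ^ (p - 1) + d ^ p / B ^ (p - 1)) := by
      field_simp
    rw [e2] at key
    have h3 : c ^ p / A ^ (p - 1) ≤ (c - d) ^ p / (A - B) ^ (p - 1) + d ^ p / B ^ (p - 1) := by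
      rw [div_le_iff₀ hA1]; linarith
    calc _ ≤ (A - B) ^ (p - 1) * ((c - d) ^ p / (A - B) ^ (p - 1)) :=
          mul_le_mul_of_nonneg_left (by linarith) hD1.le
      _ = _ := by field_simp

lemma J_pos {p t : ℝ} (ht : 0 < t) : |t| ^ (p - 2) * t = t ^ (p - 1) := by
  rw [abs_of_pos ht, ← Real.rpow_add_one ht.ne']; ring_nf

lemma J_neg (p t : ℝ) : |-t| ^ (p - 2) * (-t) = - (|t| ^ (p - 2) * t) := by
  rw [abs_neg]; ring

lemma J_abs {p : ℝ} (hp : 1 < p) (t : ℝ) : |(|t| ^ (p - 2) * t)| = |t| ^ (p - 1) := by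
  rcases eq_or_ne t 0 with rfl | ht
  · simp [Real.zero_rpow (by linarith : p - 1 ≠ 0)]
  · rw [abs_mul, abs_of_nonneg (Real.rpow_nonneg (abs_nonneg t) _),
      ← Real.rpow_add_one (abs_pos.2 ht).ne']; ring_nf

lemma J_mul_self {p : ℝ} (hp : 1 < p) (t : ℝ) : |t| ^ (p - 2) * t * t = |t| ^ p := by
  rcases eq_or_ne t 0 with rfl | ht
  · simp [Real.zero_rpow (by linarith : p ≠ 0)]
  · rw [mul_assoc, ← abs_mul_abs_self t, ← mul_assoc, ← Real.rpow_add_one (abs_pos.2 ht).ne',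
      ← Real.rpow_add_one (abs_pos.2 ht).ne']; ring_nf

lemma picone {p A B c d : ℝ} (hp : 1 < p) (hA : 0 < A) (hB : 0 < B) (hc : 0 ≤ c) (hd : 0 ≤ d) :
    |A - B| ^ (p - 2) * (A - B) * (c ^ p / A ^ (p - 1) - d ^ p / B ^ (p - 1)) ≤ |c - d| ^ p := by
  rcases lt_trichotomy B A with h | h | h
  · rw [J_pos (sub_pos.2 h)]; exact picone_aux hp hB h hc hd
  · subst h; simp; positivity
  · have := picone_aux hp hA h hd hc
    rw [← J_pos (sub_pos.2 h), abs_sub_comm d c, abs_sub_comm B A] at this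
    linarith

lemma lip_rpow {p k a b : ℝ} (hp : 1 < p) (ha : 0 ≤ a) (hb : 0 ≤ b) (hak : a ≤ k) (hbk : b ≤ k) :
    |a ^ p - b ^ p| ≤ p * k ^ (p - 1) * |a - b| := by
  have := Convex.norm_image_sub_le_of_norm_hasDerivWithin_le (𝕜 := ℝ) (f := fun x : ℝ => x ^ p)
    (f' := fun x => p * x ^ (p - 1)) (s := Icc 0 k) (C := p * k ^ (p - 1)) (x := b) (y := a)
    (fun x hx => (Real.hasDerivAt_rpow_const (Or.inr hp.le)).hasDerivWithinAt)
    (fun x hx => by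
      rw [Real.norm_of_nonneg (mul_nonneg (by linarith) (Real.rpow_nonneg hx.1 _))]
      exact mul_le_mul_of_nonneg_left (Real.rpow_le_rpow hx.1 hx.2 (by linarith)) (by linarith))
    (convex_Icc 0 k) ⟨hb, hbk⟩ ⟨ha, hak⟩
  simpa [Real.norm_eq_abs] using this

lemma lip_inv {p e a b : ℝ} (hp : 1 < p) (he : 0 < e) (hb : e ≤ b) (ha : e ≤ a) :
    |(a ^ (p - 1))⁻¹ - (b ^ (p - 1))⁻¹| ≤ (p - 1) * e ^ (-p) * |a - b| := by
  have := Convex.norm_image_sub_le_of_norm_hasDerivWithin_le (𝕜 := ℝ) (f := fun x : ℝ => x ^ (1 - p))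
    (f' := fun x => (1 - p) * x ^ (1 - p - 1)) (s := Ici e) (C := (p - 1) * e ^ (-p)) (x := b) (y := a)
    (fun x hx => (Real.hasDerivAt_rpow_const (Or.inl (he.trans_le hx).ne')).hasDerivWithinAt)
    (fun x hx => by
      have hx0 : 0 < x := he.trans_le hx
      rw [norm_mul, Real.norm_of_nonneg (Real.rpow_nonneg hx0.le _), Real.norm_eq_abs,
        abs_of_neg (by linarith)]
      rw [show 1 - p - 1 = -p by ring, neg_sub]
      exact mul_le_mul_of_nonneg_left (Real.rpow_le_rpow_of_nonpos he hx (by linarith)) (by linarith))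
    (convex_Ici e) hb ha
  have e1 : ∀ x : ℝ, e ≤ x → (x ^ (p - 1))⁻¹ = x ^ (1 - p) := fun x hx => by
    rw [← Real.rpow_neg (he.le.trans hx)]; ring_nf
  rw [e1 a ha, e1 b hb]
  simpa [Real.norm_eq_abs] using this

lemma add_rpow_aux {p a b : ℝ} (hp : 1 < p) (ha : 0 ≤ a) (hb : 0 ≤ b) :
    (a + b) ^ p ≤ 2 ^ (p - 1) * (a ^ p + b ^ p) := by
  lift a to NNReal using ha
  lift b to NNReal using hb
  exact_mod_cast NNReal.rpow_add_le_mul_rpow_add_rpow a b hp.le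

variable {N : ℕ} {s p : ℝ} {Ω : Set (EuclideanSpace ℝ (Fin N))}

lemma memW0_of_lip (hp : 1 < p) {f g v : EuclideanSpace ℝ (Fin N) → ℝ} (hf : memW0 N s p Ω f)
    (hg : memW0 N s p Ω g) (hv : Measurable v) (hv0 : ∀ x, x ∉ Ω → v x = 0) (C : ℝ) (hC : 0 ≤ C)
    (hl : ∀ x y, |v x - v y| ≤ C * (|f x - f y| + |g x - g y|)) : memW0 N s p Ω v := by
  refine ⟨hv, ?_, hv0⟩
  refine Integrable.mono' ((hf.2.1.add hg.2.1).const_mul (C ^ p * 2 ^ (p - 1))) ?_ ?_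
  · apply Measurable.aestronglyMeasurable
    fun_prop
  · refine Eventually.of_forall fun z => ?_
    have hK : 0 ≤ ‖z.1 - z.2‖ ^ ((N : ℝ) + s * p) := Real.rpow_nonneg (norm_nonneg _) _
    rw [Real.norm_of_nonneg (div_nonneg (Real.rpow_nonneg (abs_nonneg _) _) hK)]
    simp only [Pi.add_apply]
    rw [← add_div, ← mul_div_assoc]
    refine div_le_div_of_nonneg_right ?_ hK
    calc |v z.1 - v z.2| ^ p ≤ (C * (|f z.1 - f z.2| + |g z.1 - g z.2|)) ^ p :=
          Real.rpow_le_rpow (abs_nonneg _) (hl _ _) (by linarith)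
      _ = C ^ p * (|f z.1 - f z.2| + |g z.1 - g z.2|) ^ p := Real.mul_rpow hC (by positivity)
      _ ≤ C ^ p * (2 ^ (p - 1) * (|f z.1 - f z.2| ^ p + |g z.1 - g z.2| ^ p)) := by
          refine mul_le_mul_of_nonneg_left ?_ (Real.rpow_nonneg hC _)
          exact add_rpow_aux hp (abs_nonneg _) (abs_nonneg _)
      _ = _ := by ring

/-- the pairing integrand -/
def pairF (N : ℕ) (s p : ℝ) (u v : EuclideanSpace ℝ (Fin N) → ℝ)
    (z : EuclideanSpace ℝ (Fin N) × EuclideanSpace ℝ (Fin N)) : ℝ :=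
  |u z.1 - u z.2| ^ (p - 2) * (u z.1 - u z.2) * (v z.1 - v z.2) / ‖z.1 - z.2‖ ^ ((N : ℝ) + s * p)

/-- the energy integrand -/
def enF (N : ℕ) (s p : ℝ) (v : EuclideanSpace ℝ (Fin N) → ℝ)
    (z : EuclideanSpace ℝ (Fin N) × EuclideanSpace ℝ (Fin N)) : ℝ :=
  |v z.1 - v z.2| ^ p / ‖z.1 - z.2‖ ^ ((N : ℝ) + s * p)

lemma gagE_eq {v : EuclideanSpace ℝ (Fin N) → ℝ} (hv : memW0 N s p Ω v) :
    gagE N s p v = ∫ z, enF N s p v z := by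
  have := hv.2.1
  rw [Measure.volume_eq_prod] at this
  rw [Measure.volume_eq_prod]
  exact (integral_prod _ this).symm

lemma young_aux {p a b : ℝ} (hp : 1 < p) (ha : 0 ≤ a) (hb : 0 ≤ b) :
    a ^ (p - 1) * b ≤ a ^ p + b ^ p := by
  have hsp : ∀ x : ℝ, 0 ≤ x → x ^ p = x ^ (p - 1) * x := fun x hx => by
    rcases hx.eq_or_lt with rfl | hx
    · simp [Real.zero_rpow (by linarith : p ≠ 0)]
    · rw [← Real.rpow_add_one hx.ne']; ring_nf
  have := Real.rpow_nonneg ha p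
  have := Real.rpow_nonneg hb p
  rcases le_total a b with h | h
  · have : a ^ (p - 1) * b ≤ b ^ (p - 1) * b :=
      mul_le_mul_of_nonneg_right (Real.rpow_le_rpow ha h (by linarith)) hb
    rw [← hsp b hb] at this; linarith
  · have : a ^ (p - 1) * b ≤ a ^ (p - 1) * a :=
      mul_le_mul_of_nonneg_left h (Real.rpow_nonneg ha _)
    rw [← hsp a ha] at this; linarith

lemma pairF_int (hp : 1 < p) {u v : EuclideanSpace ℝ (Fin N) → ℝ} (hu : memW0 N s p Ω u)
    (hv : memW0 N s p Ω v) : Integrable (pairF N s p u v) := by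
  refine Integrable.mono' (hu.2.1.add hv.2.1) ?_ ?_
  · have := hu.1
    have := hv.1
    apply Measurable.aestronglyMeasurable
    unfold pairF
    fun_prop
  · refine Eventually.of_forall fun z => ?_
    have hK : 0 ≤ ‖z.1 - z.2‖ ^ ((N : ℝ) + s * p) := Real.rpow_nonneg (norm_nonneg _) _
    simp only [Pi.add_apply, pairF]
    rw [← add_div, norm_div, Real.norm_of_nonneg hK]
    refine div_le_div_of_nonneg_right ?_ hK
    rw [Real.norm_eq_abs, abs_mul, J_abs hp]
    exact young_aux hp (abs_nonneg _) (abs_nonneg _)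

lemma fracPair_eq (hp : 1 < p) {u v : EuclideanSpace ℝ (Fin N) → ℝ} (hu : memW0 N s p Ω u)
    (hv : memW0 N s p Ω v) : fracPair N s p u v = ∫ z, pairF N s p u v z := by
  have := pairF_int hp hu hv
  rw [Measure.volume_eq_prod] at this
  rw [Measure.volume_eq_prod]
  exact (integral_prod _ this).symm

/-- truncation -/
def tr (φ : EuclideanSpace ℝ (Fin N) → ℝ) (n : ℕ) (x : EuclideanSpace ℝ (Fin N)) : ℝ :=
  min |φ x| ((n : ℝ) + 1)

/-- epsilon -/
def ep (n : ℕ) : ℝ := 1 / ((n : ℝ) + 1)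

lemma ep_pos (n : ℕ) : 0 < ep n := by unfold ep; positivity

lemma ep_tendsto : Tendsto ep atTop (nhds 0) := tendsto_one_div_add_atTop_nhds_zero_nat

lemma tr_nonneg (φ : EuclideanSpace ℝ (Fin N) → ℝ) (n x) : 0 ≤ tr φ n x :=
  le_min (abs_nonneg _) (by positivity)

lemma tr_le (φ : EuclideanSpace ℝ (Fin N) → ℝ) (n x) : tr φ n x ≤ |φ x| := min_le_left _ _

lemma tr_lip (φ : EuclideanSpace ℝ (Fin N) → ℝ) (n x y) :
    |tr φ n x - tr φ n y| ≤ |φ x - φ y| := by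
  unfold tr
  refine (abs_min_sub_min_le_max _ _ _ _).trans ?_
  simp only [sub_self, abs_zero]
  exact max_le (abs_abs_sub_abs_le _ _) (abs_nonneg _)

lemma tr_tendsto (φ : EuclideanSpace ℝ (Fin N) → ℝ) (x) :
    Tendsto (fun n => tr φ n x) atTop (nhds |φ x|) := by
  refine tendsto_const_nhds.congr' ?_
  obtain ⟨m, hm⟩ := exists_nat_ge |φ x|
  filter_upwards [eventually_ge_atTop m] with n hn
  have : (m : ℝ) ≤ n := by exact_mod_cast hn
  rw [tr, min_eq_left]; linarith

/-- Picone test function -/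
def tst (p : ℝ) (u φ : EuclideanSpace ℝ (Fin N) → ℝ) (n : ℕ) (x : EuclideanSpace ℝ (Fin N)) : ℝ :=
  tr φ n x ^ p / (u x + ep n) ^ (p - 1)

lemma tst_mem (hp : 1 < p) {u φ : EuclideanSpace ℝ (Fin N) → ℝ} (hu : memW0 N s p Ω u)
    (hφ : memW0 N s p Ω φ) (hu0 : ∀ x, 0 ≤ u x) (n : ℕ) : memW0 N s p Ω (tst p u φ n) := by
  have hum := hu.1
  have hφm := hφ.1
  have he := ep_pos n
  set k : ℝ := (n : ℝ) + 1 with hk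
  have hk0 : 0 ≤ k := by positivity
  have hp1 : 0 ≤ p - 1 := by linarith
  have hC1 : 0 ≤ p * k ^ (p - 1) * (ep n ^ (p - 1))⁻¹ := by positivity
  have hC2 : 0 ≤ k ^ p * ((p - 1) * ep n ^ (-p)) := by positivity
  refine memW0_of_lip hp hφ hu ?_ ?_
    (p * k ^ (p - 1) * (ep n ^ (p - 1))⁻¹ + k ^ p * ((p - 1) * ep n ^ (-p))) (add_nonneg hC1 hC2) ?_
  · unfold tst tr
    fun_prop
  · intro x hx
    simp [tst, tr, hφ.2.2 x hx, hk0, Real.zero_rpow (by linarith : p ≠ 0), ← hk]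
  · intro x y
    have hx := hu0 x
    have hy := hu0 y
    have h1 := lip_rpow hp (tr_nonneg φ n x) (tr_nonneg φ n y) (min_le_right _ _) (min_le_right _ _)
    have h2 := lip_inv (a := u x + ep n) (b := u y + ep n) hp he (by linarith) (by linarith)
    have h3 := tr_lip φ n x y
    have e1 : tst p u φ n x - tst p u φ n y = (tr φ n x ^ p - tr φ n y ^ p) * ((u x + ep n) ^ (p - 1))⁻¹
        + tr φ n y ^ p * (((u x + ep n) ^ (p - 1))⁻¹ - ((u y + ep n) ^ (p - 1))⁻¹) := by
      unfold tst; ring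
    have h4 : ((u x + ep n) ^ (p - 1))⁻¹ ≤ (ep n ^ (p - 1))⁻¹ :=
      inv_anti₀ (by positivity) (Real.rpow_le_rpow he.le (by linarith) hp1)
    have h4' : 0 ≤ ((u x + ep n) ^ (p - 1))⁻¹ := by positivity
    have h5 : tr φ n y ^ p ≤ k ^ p :=
      Real.rpow_le_rpow (tr_nonneg φ n y) (min_le_right _ _) (by linarith)
    have h5' : 0 ≤ tr φ n y ^ p := Real.rpow_nonneg (tr_nonneg φ n y) _
    rw [add_sub_add_right_eq_sub] at h2
    have hpk : 0 ≤ p * k ^ (p - 1) := by positivity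
    have a1 : |(tr φ n x ^ p - tr φ n y ^ p) * ((u x + ep n) ^ (p - 1))⁻¹| ≤
        p * k ^ (p - 1) * (ep n ^ (p - 1))⁻¹ * |φ x - φ y| := by
      rw [abs_mul, abs_of_nonneg h4']
      calc _ ≤ (p * k ^ (p - 1) * |φ x - φ y|) * (ep n ^ (p - 1))⁻¹ :=
            mul_le_mul (h1.trans (mul_le_mul_of_nonneg_left h3 hpk)) h4 h4' (by positivity)
        _ = _ := by ring
    have a2 : |tr φ n y ^ p * (((u x + ep n) ^ (p - 1))⁻¹ - ((u y + ep n) ^ (p - 1))⁻¹)| ≤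
        k ^ p * ((p - 1) * ep n ^ (-p)) * |u x - u y| := by
      rw [abs_mul, abs_of_nonneg h5']
      calc _ ≤ k ^ p * ((p - 1) * ep n ^ (-p) * |u x - u y|) :=
            mul_le_mul h5 h2 (abs_nonneg _) (by positivity)
        _ = _ := by ring
    rw [e1]
    refine (abs_add_le _ _).trans ((add_le_add a1 a2).trans ?_)
    have b1 := mul_nonneg hC1 (abs_nonneg (u x - u y))
    have b2 := mul_nonneg hC2 (abs_nonneg (φ x - φ y))
    linarith

lemma pair_le_en (hp : 1 < p) {u φ : EuclideanSpace ℝ (Fin N) → ℝ} (hu0 : ∀ x, 0 ≤ u x) (n : ℕ) (z) :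
    pairF N s p u (tst p u φ n) z ≤ enF N s p φ z := by
  have he := ep_pos n
  have h1 := picone (A := u z.1 + ep n) (B := u z.2 + ep n) hp (by linarith [hu0 z.1])
    (by linarith [hu0 z.2]) (tr_nonneg φ n z.1) (tr_nonneg φ n z.2)
  rw [add_sub_add_right_eq_sub] at h1
  unfold pairF enF
  refine div_le_div_of_nonneg_right ?_ (Real.rpow_nonneg (norm_nonneg _) _)
  refine h1.trans (Real.rpow_le_rpow (abs_nonneg _) (tr_lip φ n _ _) (by linarith))

lemma rhs_tendsto (hp : 1 < p) {h u φ : EuclideanSpace ℝ (Fin N) → ℝ} (hh : Measurable h)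
    (hu : Measurable u) (hφ : Measurable φ) (hu0 : ∀ x, 0 ≤ u x)
    (hint : Integrable (fun x => h x * |φ x| ^ p) (volume.restrict Ω)) :
    Tendsto (fun n => ∫ x in Ω, h x * |u x| ^ (p - 2) * u x * tst p u φ n x) atTop
      (nhds (∫ x in Ω, if u x = 0 then 0 else h x * |φ x| ^ p)) := by
  have hrw : ∀ n x, 0 < u x → h x * |u x| ^ (p - 2) * u x * tst p u φ n x =
      h x * (u x ^ (p - 1) * tst p u φ n x) := fun n x hx => by
    rw [← J_pos hx]; ring
  refine tendsto_integral_of_dominated_convergence (fun x => ‖h x * |φ x| ^ p‖) ?_ hint.norm ?_ ?_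
  · intro n
    apply Measurable.aestronglyMeasurable
    unfold tst tr
    fun_prop
  · intro n
    refine Eventually.of_forall fun x => ?_
    rcases (hu0 x).eq_or_lt with hx | hx
    · rw [← hx]; simp only [mul_zero, zero_mul, norm_zero]; exact norm_nonneg _
    · have he := ep_pos n
      rw [hrw n x hx, norm_mul, norm_mul (h x)]
      refine mul_le_mul_of_nonneg_left ?_ (norm_nonneg _)
      have h0 : 0 ≤ tr φ n x ^ p := Real.rpow_nonneg (tr_nonneg φ n x) _
      rw [Real.norm_of_nonneg (by unfold tst; positivity), Real.norm_of_nonneg (by positivity), tst,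
        ← mul_div_assoc, div_le_iff₀ (by positivity), mul_comm]
      refine mul_le_mul (Real.rpow_le_rpow (tr_nonneg _ _ _) (tr_le _ _ _) (by linarith))
        (Real.rpow_le_rpow hx.le (by linarith) (by linarith)) (by positivity) (by positivity)
  · refine Eventually.of_forall fun x => ?_
    rcases (hu0 x).eq_or_lt with hx | hx
    · simp [← hx]
    · simp only [hrw _ x hx, if_neg hx.ne']
      refine Tendsto.const_mul _ ?_
      have t1 : Tendsto (fun n => tr φ n x ^ p) atTop (nhds (|φ x| ^ p)) :=
        (tr_tendsto φ x).rpow_const (Or.inr (by linarith))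
      have t2 : Tendsto (fun n => (u x + ep n) ^ (p - 1)) atTop (nhds ((u x) ^ (p - 1))) := by
        have : Tendsto (fun n => u x + ep n) atTop (nhds (u x)) := by
          simpa using ep_tendsto.const_add (u x)
        exact this.rpow_const (Or.inr (by linarith))
      have hne := (Real.rpow_pos_of_pos hx (p - 1)).ne'
      have := (t1.div t2 hne).const_mul (u x ^ (p - 1))
      rwa [mul_div_cancel₀ _ hne] at this

lemma zero_set (hp : 1 < p) {u φ : EuclideanSpace ℝ (Fin N) → ℝ} (hu : memW0 N s p Ω u)
    (hφ : memW0 N s p Ω φ) (hu0 : ∀ x, 0 ≤ u x) (hupos : volume {x | 0 < u x} ≠ 0)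
    {R : ℕ → ℝ} {L : ℝ} (hR : Tendsto R atTop (nhds L))
    (hG : ∀ n, ∫ z, (enF N s p φ z - pairF N s p u (tst p u φ n) z) = R n) :
    volume {x | u x = 0 ∧ φ x ≠ 0} = 0 := by
  have hum := hu.1
  have hφm := hφ.1
  set G : ℕ → EuclideanSpace ℝ (Fin N) × EuclideanSpace ℝ (Fin N) → ℝ :=
    fun n z => enF N s p φ z - pairF N s p u (tst p u φ n) z with hGdef
  have hG0 : ∀ n z, 0 ≤ G n z := fun n z => sub_nonneg.2 (pair_le_en hp hu0 n z)
  have hGm : ∀ n, Measurable (G n) := fun n => by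
    simp only [hGdef]
    unfold enF pairF tst tr
    fun_prop
  have hGi : ∀ n, Integrable (G n) := fun n =>
    Integrable.sub hφ.2.1 (pairF_int hp hu (tst_mem hp hu hφ hu0 n))
  have hep0 : ∀ n, 0 ≤ ep n ^ (p - 1) := fun n => Real.rpow_nonneg (ep_pos n).le _
  have hept : Tendsto (fun n => ep n ^ (p - 1)) atTop (nhds 0) := by
    have := ep_tendsto.rpow_const (p := p - 1) (Or.inr (by linarith))
    rwa [Real.zero_rpow (by linarith)] at this
  have hlim : Tendsto (fun n => ∫⁻ z, ENNReal.ofReal (ep n ^ (p - 1) * G n z)) atTop (nhds 0) := by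
    have : ∀ n, ∫⁻ z, ENNReal.ofReal (ep n ^ (p - 1) * G n z) = ENNReal.ofReal (ep n ^ (p - 1) * R n) := by
      intro n
      rw [← ofReal_integral_eq_lintegral_ofReal ((hGi n).const_mul _)
        (Eventually.of_forall fun z => mul_nonneg (hep0 n) (hG0 n z)), integral_const_mul, hG n]
    simp only [this]
    have := ENNReal.tendsto_ofReal (hept.mul hR)
    simpa using this
  have hfat : ∫⁻ z, liminf (fun n => ENNReal.ofReal (ep n ^ (p - 1) * G n z)) atTop = 0 := by
    have h1 := lintegral_liminf_le (μ := volume) (u := atTop) (f := fun n z => ENNReal.ofReal (ep n ^ (p - 1) * G n z))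
      (fun n => ((hGm n).const_mul _).ennreal_ofReal)
    rw [hlim.liminf_eq] at h1
    exact le_antisymm h1 zero_le
  have hae := (lintegral_eq_zero_iff (Measurable.liminf
    (fun n => ((hGm n).const_mul _).ennreal_ofReal))).1 hfat
  have hnull : volume ({x | u x = 0 ∧ φ x ≠ 0} ×ˢ {y | 0 < u y}) = 0 := by
    refine measure_mono_null ?_ hae
    rintro ⟨x, y⟩ ⟨⟨hx, hφx⟩, hy⟩
    simp only [mem_ofPred_eq] at hy
    have hxy : x ≠ y := by rintro rfl; exact hy.ne' hx
    have hK : 0 < ‖x - y‖ ^ ((N : ℝ) + s * p) :=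
      Real.rpow_pos_of_pos (norm_pos_iff.2 (sub_ne_zero.2 hxy)) _
    set K := ‖x - y‖ ^ ((N : ℝ) + s * p) with hKd
    have heq : ∀ n, ep n ^ (p - 1) * G n (x, y) = ep n ^ (p - 1) * enF N s p φ (x, y) +
        u y ^ (p - 1) * (tr φ n x ^ p - ep n ^ (p - 1) * (tr φ n y ^ p / (u y + ep n) ^ (p - 1))) / K := by
      intro n
      have hen := Real.rpow_pos_of_pos (ep_pos n) (p - 1)
      simp only [hGdef, pairF, tst, hx, ← hKd]
      rw [zero_sub, J_neg, J_pos hy, zero_add]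
      field_simp
      ring
    have hT : Tendsto (fun n => ep n ^ (p - 1) * G n (x, y)) atTop
        (nhds (u y ^ (p - 1) * |φ x| ^ p / K)) := by
      simp only [heq]
      have t1 : ∀ x, Tendsto (fun n => tr φ n x ^ p) atTop (nhds (|φ x| ^ p)) := fun x =>
        (tr_tendsto φ x).rpow_const (Or.inr (by linarith))
      have t2 : Tendsto (fun n => (u y + ep n) ^ (p - 1)) atTop (nhds ((u y) ^ (p - 1))) := by
        have : Tendsto (fun n => u y + ep n) atTop (nhds (u y)) := by
          simpa using ep_tendsto.const_add (u y)
        exact this.rpow_const (Or.inr (by linarith))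
      have hne := (Real.rpow_pos_of_pos hy (p - 1)).ne'
      have := (hept.mul_const (enF N s p φ (x, y))).add
        ((((t1 x).sub (hept.mul ((t1 y).div t2 hne))).const_mul (u y ^ (p - 1))).div_const K)
      simpa using this
    have hT' := (ENNReal.tendsto_ofReal hT).liminf_eq
    simp only [mem_compl_iff, mem_ofPred_eq, Pi.zero_apply]
    intro h0
    rw [hT', ENNReal.ofReal_eq_zero] at h0
    have : 0 < u y ^ (p - 1) * |φ x| ^ p / K := by
      have := abs_pos.2 hφx
      positivity
    linarith
  rw [Measure.volume_eq_prod, Measure.prod_prod, mul_eq_zero] at hnull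
  exact hnull.resolve_right hupos

lemma main_lower (hp : 1 < p) {h u φ : EuclideanSpace ℝ (Fin N) → ℝ} (hh : Measurable h) {lam : ℝ}
    (hu : isEigenpair N s p Ω h lam u) (hu0 : ∀ x, 0 ≤ u x)
    (hφ : memW0 N s p Ω φ) (h1 : ∫ x in Ω, h x * |φ x| ^ p = 1) : lam ≤ gagE N s p φ := by
  obtain ⟨huW, hune, hueq⟩ := hu
  have hint : Integrable (fun x => h x * |φ x| ^ p) (volume.restrict Ω) := by
    by_contra hc
    rw [integral_undef hc] at h1
    exact zero_ne_one h1
  have hupos : volume {x | 0 < u x} ≠ 0 := by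
    intro h0
    refine hune (ae_restrict_of_ae ?_)
    have : ∀ᵐ x, ¬ 0 < u x := by
      rw [ae_iff]; simpa using h0
    filter_upwards [this] with x hx
    exact le_antisymm (not_lt.1 hx) (hu0 x)
  have hRt := rhs_tendsto (Ω := Ω) hp hh huW.1 hφ.1 hu0 hint
  have hG : ∀ n, ∫ z, (enF N s p φ z - pairF N s p u (tst p u φ n) z) =
      gagE N s p φ - lam * ∫ x in Ω, h x * |u x| ^ (p - 2) * u x * tst p u φ n x := by
    intro n
    have hm := tst_mem hp huW hφ hu0 n
    rw [← hueq _ hm, fracPair_eq hp huW hm, gagE_eq hφ]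
    exact integral_sub hφ.2.1 (pairF_int hp huW hm)
  have hz := zero_set hp huW hφ hu0 hupos ((hRt.const_mul lam).const_sub (gagE N s p φ)) hG
  have hlim1 : (∫ x in Ω, if u x = 0 then 0 else h x * |φ x| ^ p) = 1 := by
    rw [← h1]
    refine integral_congr_ae (ae_restrict_of_ae ?_)
    have : ∀ᵐ x, ¬ (u x = 0 ∧ φ x ≠ 0) := by
      rw [ae_iff]; simpa using hz
    filter_upwards [this] with x hx
    split_ifs with h0
    · have : φ x = 0 := by
        by_contra h2; exact hx ⟨h0, h2⟩
      simp [this, Real.zero_rpow (by linarith : p ≠ 0)]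
    · rfl
  rw [hlim1] at hRt
  have hfin := (hRt.const_mul lam).const_sub (gagE N s p φ)
  have := ge_of_tendsto' hfin (b := 0) (fun n => by
    rw [← hG n]
    exact integral_nonneg fun z => sub_nonneg.2 (pair_le_en hp hu0 n z))
  linarith

lemma en_pos (hN : N ≠ 0) (hp : 1 < p) (hΩb : Bornology.IsBounded Ω)
    {u : EuclideanSpace ℝ (Fin N) → ℝ} (hu : memW0 N s p Ω u)
    (hne : ¬ (∀ᵐ x ∂volume.restrict Ω, u x = 0)) : 0 < gagE N s p u := by
  have hnn : ∀ z, 0 ≤ enF N s p u z := fun z => by unfold enF; positivity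
  rw [gagE_eq hu]
  refine lt_of_le_of_ne (integral_nonneg hnn) fun h0 => ?_
  have hae := (integral_eq_zero_iff_of_nonneg hnn hu.2.1).1 h0.symm
  have hnull : volume ({x | u x ≠ 0} ×ˢ Ωᶜ) = 0 := by
    refine measure_mono_null ?_ hae
    rintro ⟨x, y⟩ ⟨hx, hy⟩
    have hy0 := hu.2.2 y hy
    simp only [mem_ofPred_eq] at hx
    have hxy : x ≠ y := by rintro rfl; exact hx hy0
    have hK : 0 < ‖x - y‖ ^ ((N : ℝ) + s * p) :=
      Real.rpow_pos_of_pos (norm_pos_iff.2 (sub_ne_zero.2 hxy)) _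
    have : 0 < enF N s p u (x, y) := by
      unfold enF
      simp only [hy0, sub_zero]
      have := abs_pos.2 hx
      positivity
    exact this.ne'
  rw [Measure.volume_eq_prod, Measure.prod_prod, mul_eq_zero] at hnull
  rcases hnull with h1 | h1
  · exact hne (ae_restrict_of_ae (by rw [ae_iff]; exact h1))
  · haveI : Nonempty (Fin N) := ⟨⟨0, Nat.pos_of_ne_zero hN⟩⟩
    have h2 : volume (univ : Set (EuclideanSpace ℝ (Fin N))) ≤ volume Ω + volume Ωᶜ := by
      rw [← union_compl_self Ω]; exact measure_union_le _ _
    rw [h1, add_zero] at h2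
    have h3 := hΩb.measure_lt_top (μ := (volume : Measure (EuclideanSpace ℝ (Fin N))))
    have h4 : volume (univ : Set (EuclideanSpace ℝ (Fin N))) = ⊤ :=
      measure_univ_of_isAddLeftInvariant _
    rw [h4] at h2
    exact absurd h3 (not_lt.2 h2)

lemma fracPair_self (hp : 1 < p) (u : EuclideanSpace ℝ (Fin N) → ℝ) :
    fracPair N s p u u = gagE N s p u := by
  unfold fracPair gagE
  simp only [J_mul_self hp]

lemma core (hp : 1 < p) (hΩb : Bornology.IsBounded Ω) {h u : EuclideanSpace ℝ (Fin N) → ℝ}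
    (hh : Measurable h) (hpos : 0 < volume {x ∈ Ω | 0 < h x}) {lam : ℝ}
    (hu : isEigenpair N s p Ω h lam u) (hu0 : ∀ x, 0 ≤ u x) (hlam : lam1 N s p Ω h < lam) :
    False := by
  have hl0 : 0 < lam := by
    refine lt_of_le_of_lt (Real.sInf_nonneg ?_) hlam
    rintro t ⟨v, hv, -, rfl⟩
    rw [gagE_eq hv]
    exact integral_nonneg fun z => by unfold enF; positivity
  have heq : gagE N s p u = lam * ∫ x in Ω, h x * |u x| ^ p := by
    rw [← fracPair_self hp, hu.2.2 u hu.1]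
    congr 2
    ext x
    rw [← J_mul_self hp (u x)]; ring
  have hI : 0 < ∫ x in Ω, h x * |u x| ^ p := by
    rcases eq_or_ne N 0 with rfl | hN
    · have hsub : ∀ f : EuclideanSpace ℝ (Fin 0) → ℝ, f = fun _ => f 0 := fun f => by
        ext x; rw [Subsingleton.elim x 0]
      have h0 : 0 < h 0 := by
        by_contra hc
        have : {x ∈ Ω | 0 < h x} = ∅ := by
          ext x
          simp only [mem_ofPred_eq, mem_empty_iff_false, iff_false, not_and]
          intro _; rwa [Subsingleton.elim x 0]
        rw [this] at hpos; simp at hpos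
      have hu' : u 0 ≠ 0 := by
        intro hc
        refine hu.2.1 (Eventually.of_forall fun x => ?_)
        rw [Subsingleton.elim x 0]; exact hc
      have hv : 0 < volume.real Ω := by
        refine ENNReal.toReal_pos ?_ hΩb.measure_lt_top.ne
        exact (hpos.trans_le (measure_mono (fun x hx => hx.1))).ne'
      rw [hsub (fun x => h x * |u x| ^ p), setIntegral_const, smul_eq_mul]
      have := abs_pos.2 hu'
      positivity
    · have := en_pos hN hp hΩb hu.1 hu.2.1
      rw [heq] at this
      exact pos_of_mul_pos_right this hl0.le
  set I := ∫ x in Ω, h x * |u x| ^ p with hId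
  refine absurd hlam (not_lt.2 (le_csInf ?_ ?_))
  · have hc0 : 0 < I ^ (-(1 / p)) := Real.rpow_pos_of_pos hI _
    refine ⟨_, fun x => I ^ (-(1 / p)) * u x, ?_, ?_, rfl⟩
    · refine memW0_of_lip hp hu.1 hu.1 (hu.1.1.const_mul _)
        (fun x hx => by simp [hu.1.2.2 x hx]) _ hc0.le fun x y => ?_
      rw [← mul_sub, abs_mul, abs_of_pos hc0]
      exact mul_le_mul_of_nonneg_left (by linarith [abs_nonneg (u x - u y)]) hc0.le
    · have : ∀ x, h x * |I ^ (-(1 / p)) * u x| ^ p = I⁻¹ * (h x * |u x| ^ p) := fun x => by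
        rw [abs_mul, abs_of_pos hc0, Real.mul_rpow hc0.le (abs_nonneg _), ← Real.rpow_mul hI.le,
          show -(1 / p) * p = -1 by field_simp, Real.rpow_neg_one]
        ring
      simp only [this]
      rw [integral_const_mul, ← hId, inv_mul_cancel₀ hI.ne']
  · rintro t ⟨φ, hφ, h1, rfl⟩
    exact main_lower hp hh hu hu0 hφ h1

lemma eig_congr (hp : 1 < p) {h u w : EuclideanSpace ℝ (Fin N) → ℝ} {lam : ℝ}
    (hu : isEigenpair N s p Ω h lam u) (hw : memW0 N s p Ω w) (huw : u =ᵐ[volume] w) :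
    isEigenpair N s p Ω h lam w := by
  refine ⟨hw, fun hc => hu.2.1 ?_, fun v hv => ?_⟩
  · filter_upwards [hc, ae_restrict_of_ae huw] with x h1 h2
    rw [h2, h1]
  · have := hu.2.2 v hv
    have e1 : fracPair N s p u v = fracPair N s p w v := by
      refine integral_congr_ae ?_
      filter_upwards [huw] with x hx
      refine integral_congr_ae ?_
      filter_upwards [huw] with y hy
      rw [hx, hy]
    rw [← e1, this]
    congr 1
    refine integral_congr_ae (ae_restrict_of_ae ?_)
    filter_upwards [huw] with x hx
    rw [hx]

lemma eig_neg {h u : EuclideanSpace ℝ (Fin N) → ℝ} {lam : ℝ}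
    (hu : isEigenpair N s p Ω h lam u) : isEigenpair N s p Ω h lam (fun x => - u x) := by
  refine ⟨⟨hu.1.1.neg, ?_, fun x hx => by simp [hu.1.2.2 x hx]⟩, fun hc => hu.2.1 ?_, fun v hv => ?_⟩
  · have := hu.1.2.1
    refine this.congr (Eventually.of_forall fun z => ?_)
    simp only
    rw [← abs_neg]; ring_nf
  · filter_upwards [hc] with x h1
    exact neg_eq_zero.1 h1
  · have e1 : fracPair N s p (fun x => - u x) v = - fracPair N s p u v := by
      unfold fracPair
      rw [← integral_neg]
      congr 1; ext x
      rw [← integral_neg]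
      congr 1; ext y
      rw [show -u x - -u y = -(u x - u y) by ring, J_neg]; ring
    rw [e1, hu.2.2 v hv, ← mul_neg, ← integral_neg]
    congr 2; ext x
    rw [abs_neg]; ring

lemma core' (hp : 1 < p) (hΩ : IsOpen Ω) (hΩb : Bornology.IsBounded Ω)
    {h u : EuclideanSpace ℝ (Fin N) → ℝ}
    (hh : Measurable h) (hpos : 0 < volume {x ∈ Ω | 0 < h x}) {lam : ℝ}
    (hu : isEigenpair N s p Ω h lam u) (hlam : lam1 N s p Ω h < lam) :
    ¬ (∀ᵐ x ∂volume.restrict Ω, max (-u x) 0 = 0) := by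
  intro hc
  rw [ae_restrict_iff' hΩ.measurableSet] at hc
  refine core hp hΩb hh hpos (u := fun x => max (u x) 0) ?_ (fun x => le_max_right _ _) hlam
  refine eig_congr hp hu ?_ ?_
  · refine memW0_of_lip hp hu.1 hu.1 (hu.1.1.max measurable_const)
      (fun x hx => by simp [hu.1.2.2 x hx]) 1 zero_le_one fun x y => ?_
    have := abs_max_sub_max_le_max (u x) 0 (u y) 0
    have h2 : max |u x - u y| |(0:ℝ) - 0| ≤ |u x - u y| := by simp
    linarith [abs_nonneg (u x - u y)]
  · filter_upwards [hc] with x hx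
    by_cases hxΩ : x ∈ Ω
    · have := le_max_left (-u x) 0
      rw [hx hxΩ] at this
      rw [max_eq_left]; linarith
    · simp [hu.1.2.2 x hxΩ]

end helpers

/-- for `h ∈ W̃_p` with `|{h > 0} ∩ Ω| > 0`, any eigenfunction `u` associated
with an eigenvalue `λ > λ₁` is sign-changing: `u₊ ≢ 0` and `u₋ ≢ 0` in `Ω`. -/
theorem stmt13 (N : ℕ) (Ω : Set (EuclideanSpace ℝ (Fin N)))
    (hΩo : IsOpen Ω) (hΩc : IsConnected Ω) (hΩb : Bornology.IsBounded Ω)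
    (s p : ℝ) (hs0 : 0 < s) (hs1 : s ≤ 1) (hp : 1 < p)
    (h : EuclideanSpace ℝ (Fin N) → ℝ) (hmeas : Measurable h)
    (hW : inWtq N Ω s p p h)
    (hpos : 0 < volume {x ∈ Ω | 0 < h x})
    (lam : ℝ) (u : EuclideanSpace ℝ (Fin N) → ℝ)
    (heig : isEigenpair N s p Ω h lam u)
    (hlam : lam1 N s p Ω h < lam) :
    ¬ (∀ᵐ x ∂volume.restrict Ω, max (u x) 0 = 0) ∧
    ¬ (∀ᵐ x ∂volume.restrict Ω, max (-u x) 0 = 0) := by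
  refine ⟨fun hc => ?_, core' hp hΩo hΩb hmeas hpos heig hlam⟩
  refine core' hp hΩo hΩb hmeas hpos (eig_neg heig) hlam ?_
  simpa only [neg_neg] using hc

end
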